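/- arXiv:2505.16757 — 2 statements merged into one kernel-verified Lean document; each statement's English description precedes it below -/
import Mathlib

section
/- Fix α ≥ 0, set α₋ = α and α₊ = √(α² + 1), let γ₊, γ₋ ∈ ℝ, and let L_α(γ±) := (1+α²)γ₊ − α²γ₋. Then for every sufficiently small δ > 0 (so that α±(1 ± δγ±) ≥ 0 and the quantity λ² below is positive), the identity Φ_{α₊(1+δγ₊), α₋(1+δγ₋)}(z) = Φ_{α'}(λ z) holds for all z ∈ ℝ, where λ² = 1 + 2δL_α(γ±) + δ²((γ₊+γ₋)L_α(γ±) − γ₊γ₋) and α' = αλ^{−1}(1+δγ₋). -/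
noncomputable section

/-- The two-plane function Φ_{β₊,β₋}(z) = β₊ max{z,0} + β₋ min{z,0}. -/
def Phi2 (bp bm z : ℝ) : ℝ := bp * max z 0 + bm * min z 0

/-- Lemma A.3, slope recombination identity:
with α₋ = α, α₊ = √(α²+1), L = L_α(γ±) = (1+α²)γ₊ − α²γ₋,
λ² = 1 + 2δL + δ²((γ₊+γ₋)L − γ₊γ₋) and α' = αλ⁻¹(1+δγ₋), one has
Φ_{α₊(1+δγ₊),α₋(1+δγ₋)}(z) = Φ_{α'}(λz) for all z, for every δ > 0 small
enough that α±(1±δγ±) ≥ 0 and λ² > 0. -/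
theorem statement18 (α γp γm : ℝ) (hα : 0 ≤ α) (L lam2 lam α' : ℝ)
    (hL : L = (1 + α^2) * γp - α^2 * γm)
    (δ : ℝ) (hδ : 0 < δ)
    (hlam2 : lam2 = 1 + 2*δ*L + δ^2*((γp + γm)*L - γp*γm))
    (hap : 0 ≤ Real.sqrt (α^2 + 1) * (1 + δ*γp))
    (ham : 0 ≤ α * (1 + δ*γm))
    (hpos : 0 < lam2)
    (hlam : lam = Real.sqrt lam2)
    (hα' : α' = α * (1 + δ*γm) / lam) :
    ∀ z : ℝ,
      Phi2 (Real.sqrt (α^2 + 1) * (1 + δ*γp)) (α * (1 + δ*γm)) z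
        = Phi2 (Real.sqrt (1 + α'^2)) α' (lam * z) := by
  intro z
  have hl : 0 < lam := by rw [hlam]; exact Real.sqrt_pos.mpr hpos
  have hsq : lam ^ 2 = lam2 := by rw [hlam]; exact Real.sq_sqrt hpos.le
  have ha : α' * lam = α * (1 + δ*γm) := by
    rw [hα']; field_simp
  have hs : Real.sqrt (α^2 + 1) ^ 2 = α^2 + 1 := Real.sq_sqrt (by positivity)
  have ht : Real.sqrt (1 + α'^2) ^ 2 = 1 + α'^2 := Real.sq_sqrt (by positivity)
  have hb : Real.sqrt (1 + α'^2) * lam = Real.sqrt (α^2 + 1) * (1 + δ*γp) := by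
    have h0 : 0 ≤ Real.sqrt (1 + α'^2) * lam := by positivity
    rw [← sq_eq_sq₀ h0 hap, mul_pow, mul_pow, hs, ht]
    have : (1 + α'^2) * lam^2 = lam^2 + (α' * lam)^2 := by ring
    rw [this, ha, hsq, hlam2, hL]
    ring
  unfold Phi2
  rw [← hb, ← ha]
  have h1 : max (lam * z) 0 = lam * max z 0 := by
    rw [mul_max_of_nonneg _ _ hl.le, mul_zero]
  have h2 : min (lam * z) 0 = lam * min z 0 := by
    rw [mul_min_of_nonneg _ _ hl.le, mul_zero]
  rw [h1, h2]
  ring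
end
end

section
/- Let u : B_r → ℝ (r > 0, B_r ⊂ ℝ^d), let α₀, α₁ > 0, let e₀, e₁ be unit vectors, and let 0 < η < 1/100. If sup_{x ∈ B_r} |Ψ_{α₀}(u(x)) − x·e₀| ≤ ηr and sup_{x ∈ B_r} |Ψ_{α₁}(u(x)) − x·e₁| ≤ ηr, then |√(1+α₀²)/√(1+α₁²) − 1| ≤ 24η and |e₁ − e₀| ≤ 6√η. -/
open Metric
noncomputable section

abbrev Ed (d : ℕ) : Type := EuclideanSpace ℝ (Fin d)

/-- The inverse two-plane profile Ψ_α(t) = max{t,0}/√(1+α²) + min{t,0}/α. -/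
def Psi (α t : ℝ) : ℝ := max t 0 / Real.sqrt (1 + α^2) + min t 0 / α

lemma aux {d : ℕ} {r a b η : ℝ} {e f : Ed d} (hr : 0 < r) (ha : 0 < a)
    (he : ‖e‖ = 1) (hη : 0 < η) (hη' : η < 1/100) (u : Ed d → ℝ)
    (h0 : ∀ x ∈ ball (0 : Ed d) r, |Psi a (u x) - (inner ℝ x e : ℝ)| ≤ η * r)
    (h1 : ∀ x ∈ ball (0 : Ed d) r, |Psi b (u x) - (inner ℝ x f : ℝ)| ≤ η * r) :
    (1 - 2 * η) * (Real.sqrt (1 + a^2) / Real.sqrt (1 + b^2))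
      ≤ (1 - η) * (inner ℝ e f : ℝ) + η := by
  have hs : 0 < r * (1 - η) := by apply mul_pos hr; linarith
  have hx : (r * (1 - η)) • e ∈ ball (0 : Ed d) r := by
    rw [mem_ball_zero_iff, norm_smul, he, Real.norm_of_nonneg hs.le]
    nlinarith
  have k0 := h0 _ hx
  have k1 := h1 _ hx
  rw [real_inner_smul_left] at k0 k1
  rw [real_inner_self_eq_norm_sq, he] at k0
  set v := u ((r * (1 - η)) • e)
  have k0' := (abs_le.1 k0).1
  have k1' := (abs_le.1 k1).2
  have hA : 0 < Real.sqrt (1 + a^2) := Real.sqrt_pos.2 (by positivity)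
  have hB : 0 < Real.sqrt (1 + b^2) := Real.sqrt_pos.2 (by positivity)
  have hv : 0 < v := by
    by_contra hv
    have hv := not_lt.1 hv
    have : Psi a v ≤ 0 := by
      unfold Psi
      rw [max_eq_right hv, min_eq_left hv, zero_div, zero_add]
      exact div_nonpos_of_nonpos_of_nonneg hv ha.le
    nlinarith
  unfold Psi at k0' k1'
  rw [max_eq_left hv.le, min_eq_right hv.le, zero_div, add_zero] at k0' k1'
  have e1 : v / Real.sqrt (1 + b^2)
      = v / Real.sqrt (1 + a^2) * (Real.sqrt (1 + a^2) / Real.sqrt (1 + b^2)) := by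
    field_simp
  have hq : 0 < Real.sqrt (1 + a^2) / Real.sqrt (1 + b^2) := div_pos hA hB
  rw [e1] at k1'
  set q := Real.sqrt (1 + a^2) / Real.sqrt (1 + b^2)
  have e2 : r * (1 - 2 * η) * q ≤ v / Real.sqrt (1 + a^2) * q :=
    mul_le_mul_of_nonneg_right (by nlinarith) hq.le
  refine le_of_mul_le_mul_left ?_ hr
  linarith

/-- Lemma 7.3: if u is η r-close in B_r to two-plane
profiles with data (α₀,e₀) and (α₁,e₁) and η < 1/100, then the slopes and
directions nearly agree:
|√(1+α₀²)/√(1+α₁²) − 1| ≤ 24η and |e₁ − e₀| ≤ 6√η. -/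
theorem statement19 (d : ℕ) (hd : 2 ≤ d) (r α₀ α₁ η : ℝ) (e₀ e₁ : Ed d)
    (hr : 0 < r) (hα₀ : 0 < α₀) (hα₁ : 0 < α₁)
    (he₀ : ‖e₀‖ = 1) (he₁ : ‖e₁‖ = 1)
    (hη : 0 < η) (hη' : η < 1/100)
    (u : Ed d → ℝ)
    (hu₀ : ∀ x ∈ ball (0 : Ed d) r, |Psi α₀ (u x) - (inner ℝ x e₀ : ℝ)| ≤ η * r)
    (hu₁ : ∀ x ∈ ball (0 : Ed d) r, |Psi α₁ (u x) - (inner ℝ x e₁ : ℝ)| ≤ η * r) :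
    |Real.sqrt (1 + α₀^2) / Real.sqrt (1 + α₁^2) - 1| ≤ 24 * η ∧
    ‖e₁ - e₀‖ ≤ 6 * Real.sqrt η := by
  have k0 := aux hr hα₀ he₀ hη hη' u hu₀ hu₁
  have k1 := aux hr hα₁ he₁ hη hη' u hu₁ hu₀
  rw [real_inner_comm] at k1
  have hA : 0 < Real.sqrt (1 + α₀^2) := Real.sqrt_pos.2 (by positivity)
  have hB : 0 < Real.sqrt (1 + α₁^2) := Real.sqrt_pos.2 (by positivity)
  have hc : (inner ℝ e₀ e₁ : ℝ) ≤ 1 := by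
    have := real_inner_le_norm e₀ e₁
    rwa [he₀, he₁, one_mul] at this
  have hn := norm_sub_sq_real e₁ e₀
  rw [he₀, he₁, real_inner_comm] at hn
  set c := (inner ℝ e₀ e₁ : ℝ)
  have hq : 0 < Real.sqrt (1 + α₀^2) / Real.sqrt (1 + α₁^2) := div_pos hA hB
  have hp : 0 < Real.sqrt (1 + α₁^2) / Real.sqrt (1 + α₀^2) := div_pos hB hA
  have hpq : Real.sqrt (1 + α₀^2) / Real.sqrt (1 + α₁^2)
    * (Real.sqrt (1 + α₁^2) / Real.sqrt (1 + α₀^2)) = 1 := by field_simp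
  set q := Real.sqrt (1 + α₀^2) / Real.sqrt (1 + α₁^2)
  set p := Real.sqrt (1 + α₁^2) / Real.sqrt (1 + α₀^2)
  have q1 : (1 - 2 * η) * q ≤ 1 := by nlinarith
  have p1 : (1 - 2 * η) * p ≤ 1 := by nlinarith
  have q2 : 1 - 2 * η ≤ q := by
    have := mul_le_mul_of_nonneg_left p1 hq.le
    nlinarith
  have q3 : q ≤ 2 := by nlinarith
  constructor
  · rw [abs_le]
    constructor <;> nlinarith
  · have c1 : 1 - 5 * η ≤ (1 - η) * c := by nlinarith
    have c0 : 0 < c := by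
      by_contra h
      nlinarith
    have c2 : 1 - 5 * η ≤ c := by nlinarith
    refine abs_le_of_sq_le_sq' ?_ (by positivity) |>.2
    rw [mul_pow, Real.sq_sqrt hη.le]
    nlinarith
end
end
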